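/- Let f(X) = Σ_{i=0}^{mn} a_i X^i be a primitive polynomial of degree mn over F_2, i.e., f is monic irreducible and the multiplicative order of the class of X in the field F_2[X]/(f) is 2^{mn} − 1. Let T be the mn×mn block companion matrix over F_2 built from the matrix coefficients C_0, …, C_{n−1}. Then T is invertible and the multiplicative order of T in GL_{mn}(F_2) is exactly 2^{mn} − 1. -/

import Mathlib

open Polynomial Matrix

/-- The matrix coefficient `C_i` (for `i : Fin n`) built from the coefficients of `f`:
its `m`-th (last) column is `(a_i, a_{n+i}, …, a_{(m-1)n+i})ᵀ`; for `i = 0` it additionally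
has ones on the subdiagonal (i.e. `C_0 = R + Ĉ_0`), and all other entries are zero. -/
def xorshiftC (f : Polynomial (ZMod 2)) (m n : ℕ) (i : Fin n) :
    Matrix (Fin m) (Fin m) (ZMod 2) :=
  Matrix.of fun j k =>
    if (k : ℕ) = m - 1 then f.coeff ((j : ℕ) * n + (i : ℕ))
    else if (i : ℕ) = 0 ∧ (j : ℕ) = (k : ℕ) + 1 then 1 else 0

/-- The `mn × mn` block companion matrix `T` (indexed by `Fin n × Fin m`, block row/column
index first): the `(i, i+1)` block is `I_m`, the last block row is `(C_0, C_1, …, C_{n-1})`,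
and all other blocks are zero. -/
def xorshiftT (f : Polynomial (ZMod 2)) (m n : ℕ) :
    Matrix (Fin n × Fin m) (Fin n × Fin m) (ZMod 2) :=
  Matrix.of fun p p' =>
    if (p.1 : ℕ) = n - 1 then xorshiftC f m n p'.1 p.2 p'.2
    else if (p'.1 : ℕ) = (p.1 : ℕ) + 1 ∧ p.2 = p'.2 then 1 else 0

/-- A polynomial `f` of degree `N` over `F_2` is primitive if it is monic, irreducible, and the
class of `X` has multiplicative order `2^N - 1` in `F_2[X]/(f)`. -/
def IsPrimitivePoly (f : Polynomial (ZMod 2)) (N : ℕ) : Prop :=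
  f.Monic ∧ Irreducible f ∧ f.natDegree = N ∧
    orderOf (Ideal.Quotient.mk (Ideal.span {f}) (Polynomial.X : Polynomial (ZMod 2)))
      = 2 ^ N - 1

/-!
Let `α` be the class of `X` in the field `K = F_2[X]/(f)`. The point is that `α` is an eigenvalue
of `T` over `K`: an explicit row vector `v` with `v T = α v` (`xorshiftVec`) is found by solving
the block recurrence. Outside the last column of each block the solution is
`v_{i,k} = α^{kn + n - 1 - i}`; in the last column `α^{i+1} v_{i,m-1}` is the sum of the terms
`a_l α^l` of `f(α)`, `l < mn`, whose exponent is congruent mod `n` to one of `0, …, i`. For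
`i = n - 1` this is the full sum `f(α) - α^{mn} = -α^{mn} = α^{mn}`, so the two descriptions
agree on the last block row (`xorshiftVec_last`), which makes the recurrence close up.

Hence `α` is a root of the characteristic polynomial of `T`, which is therefore divisible by `f`;
both are monic of degree `mn`, so they are equal, and `f(T) = 0` by Cayley–Hamilton
(`aeval_eq_zero_of_eigen`). If `α^k = 1` then `f ∣ X^k - 1`, so `T^k = 1`; conversely `T^k = 1`
gives `v = α^k v`, so `α^k = 1`. Thus `T` and `α` have the same order.
-/

section Eigenvector

variable {K : Type*} [Field K] [Algebra (ZMod 2) K]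

/-- The sum of those terms `a_l α^l` with `l < mn` whose exponent `l` is congruent mod `n` to one
of `0, …, i - 1`. -/
noncomputable def partialEval (f : Polynomial (ZMod 2)) (m n : ℕ) (α : K) (i : ℕ) : K :=
  ∑ r ∈ Finset.range i, ∑ j ∈ Finset.range m,
    algebraMap (ZMod 2) K (f.coeff (j * n + r)) * α ^ (j * n + r)

/-- The left eigenvector of `T` for the eigenvalue `α`. -/
noncomputable def xorshiftVec (f : Polynomial (ZMod 2)) (m n : ℕ) (α : K) : Fin n × Fin m → K :=
  fun p => if (p.2 : ℕ) = m - 1 then (α ^ ((p.1 : ℕ) + 1))⁻¹ * partialEval f m n α ((p.1 : ℕ) + 1)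
    else α ^ ((p.2 : ℕ) * n + (n - 1 - (p.1 : ℕ)))

theorem sum_range_mul_eq {M : Type*} [AddCommMonoid M] (g : ℕ → M) (m n : ℕ) :
    ∑ l ∈ Finset.range (m * n), g l
      = ∑ r ∈ Finset.range n, ∑ j ∈ Finset.range m, g (j * n + r) := by
  rw [Finset.sum_comm]
  induction m with
  | zero => simp
  | succ m ih => rw [Nat.succ_mul, Finset.sum_range_add, ih, Finset.sum_range_succ _ m]

theorem partialEval_full {f : Polynomial (ZMod 2)} {m n : ℕ} {α : K} (hmon : f.Monic)
    (hdeg : f.natDegree = m * n) (hα : aeval α f = 0) :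
    partialEval f m n α n = α ^ (m * n) := by
  rw [aeval_eq_sum_range, Finset.sum_range_succ, hmon.coeff_natDegree, hdeg, one_smul,
    sum_range_mul_eq] at hα
  simp only [Algebra.smul_def] at hα
  -- `-1 = 1` in `K`, because `2 = 0` already in `ZMod 2`
  have h2 : (2 : K) = 0 := by
    rw [← map_ofNat (algebraMap (ZMod 2) K) 2, show (OfNat.ofNat 2 : ZMod 2) = 0 from rfl,
      map_zero]
  unfold partialEval
  linear_combination hα - α ^ (m * n) * h2

/-- On the last block row both cases of the definition of the eigenvector give `α^{kn}`. -/
theorem xorshiftVec_last {f : Polynomial (ZMod 2)} {m n : ℕ} {α : K} (hm : 0 < m)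
    (hmon : f.Monic) (hdeg : f.natDegree = m * n) (hα : aeval α f = 0) (h0 : α ≠ 0)
    (p : Fin n × Fin m) (hp : (p.1 : ℕ) = n - 1) :
    xorshiftVec f m n α p = α ^ ((p.2 : ℕ) * n) := by
  have hn : n - 1 + 1 = n := by have := p.1.isLt; omega
  unfold xorshiftVec
  split_ifs with hk
  · rw [hp, hn, partialEval_full hmon hdeg hα, hk, inv_mul_eq_iff_eq_mul₀ (pow_ne_zero _ h0),
      ← pow_add]
    congr 1
    obtain ⟨m, rfl⟩ : ∃ k, m = k + 1 := ⟨m - 1, by omega⟩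
    simp only [Nat.add_sub_cancel]
    ring
  · simp [hp]

theorem xorshiftVec_vecMul {f : Polynomial (ZMod 2)} {m n : ℕ} {α : K} (hm : 0 < m) (hn : 0 < n)
    (hmon : f.Monic) (hdeg : f.natDegree = m * n) (hα : aeval α f = 0) (h0 : α ≠ 0) :
    xorshiftVec f m n α ᵥ* (xorshiftT f m n).map (algebraMap (ZMod 2) K)
      = α • xorshiftVec f m n α := by
  obtain ⟨N, rfl⟩ : ∃ k, n = k + 1 := ⟨n - 1, by omega⟩
  have hlast (j : Fin m) : xorshiftVec f m (N + 1) α (Fin.last N, j) = α ^ ((j : ℕ) * (N + 1)) :=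
    xorshiftVec_last hm hmon hdeg hα h0 _ (by simp)
  funext ⟨i, k⟩
  -- the contribution of the last block row of `T`
  have hC : ∑ j : Fin m, α ^ ((j : ℕ) * (N + 1)) *
        algebraMap (ZMod 2) K (xorshiftC f m (N + 1) i j k)
      = if (k : ℕ) = m - 1 then ∑ j ∈ Finset.range m,
          algebraMap (ZMod 2) K (f.coeff (j * (N + 1) + i)) * α ^ (j * (N + 1))
        else if (i : ℕ) = 0 then α ^ (((k : ℕ) + 1) * (N + 1)) else 0 := by
    unfold xorshiftC
    split_ifs with hk hi
    · rw [Finset.sum_range]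
      exact Finset.sum_congr rfl fun j _ => by simp [hk, mul_comm]
    · have hk' : (k : ℕ) + 1 < m := by have := k.isLt; omega
      rw [Finset.sum_eq_single ⟨(k : ℕ) + 1, hk'⟩]
      · simp [hk, hi]
      · intro j _ hj
        have : (j : ℕ) ≠ (k : ℕ) + 1 := fun h => hj (Fin.ext h)
        simp [hk, this]
      · simp
    · simp [hk, hi]
  -- the contribution of the identity blocks
  have hI : ∑ r : Fin N, ∑ j : Fin m, xorshiftVec f m (N + 1) α (r.castSucc, j) *
        algebraMap (ZMod 2) K (xorshiftT f m (N + 1) (r.castSucc, j) (i, k))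
      = if h : (i : ℕ) = 0 then 0
        else xorshiftVec f m (N + 1) α (⟨(i : ℕ) - 1, by omega⟩, k) := by
    have hne (r : Fin N) : (r : ℕ) ≠ N := r.isLt.ne
    unfold xorshiftT
    split_ifs with hi
    · simp [hi, hne]
    · have hi' : (i : ℕ) - 1 < N := by have := i.isLt; omega
      rw [Finset.sum_eq_single ⟨(i : ℕ) - 1, hi'⟩, Finset.sum_eq_single k]
      · have h1 : (i : ℕ) - 1 + 1 = i := by omega
        have h2 : (i : ℕ) - 1 ≠ N := hi'.ne
        simp [h1, h2]
      · intro j _ hj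
        have h2 : (i : ℕ) - 1 ≠ N := hi'.ne
        simp [hj, h2]
      · simp
      · intro r _ hr
        have : (i : ℕ) ≠ (r : ℕ) + 1 := fun h => hr (Fin.ext (by simp [h]))
        simp [hne, this]
      · simp
  have hsum : (xorshiftVec f m (N + 1) α ᵥ*
        (xorshiftT f m (N + 1)).map (algebraMap (ZMod 2) K)) (i, k)
      = (if h : (i : ℕ) = 0 then 0
          else xorshiftVec f m (N + 1) α (⟨(i : ℕ) - 1, by omega⟩, k))
        + if (k : ℕ) = m - 1 then ∑ j ∈ Finset.range m,
            algebraMap (ZMod 2) K (f.coeff (j * (N + 1) + i)) * α ^ (j * (N + 1))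
          else if (i : ℕ) = 0 then α ^ (((k : ℕ) + 1) * (N + 1)) else 0 := by
    rw [← hC, ← hI]
    simp only [vecMul, dotProduct, Fintype.sum_prod_type, Fin.sum_univ_castSucc (n := N),
      Matrix.map_apply, hlast]
    congr 1
    simp [xorshiftT]
  rw [hsum]
  simp only [Pi.smul_apply, smul_eq_mul]
  by_cases hk : (k : ℕ) = m - 1
  · -- last column: the recurrence adds one residue class of terms to the partial sum
    have hstep : partialEval f m (N + 1) α ((i : ℕ) + 1) = partialEval f m (N + 1) α i
        + α ^ (i : ℕ) * ∑ j ∈ Finset.range m,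
            algebraMap (ZMod 2) K (f.coeff (j * (N + 1) + i)) * α ^ (j * (N + 1)) := by
      unfold partialEval
      rw [Finset.sum_range_succ, Finset.mul_sum]
      congr 1
      exact Finset.sum_congr rfl fun j _ => by ring
    have hv : α * xorshiftVec f m (N + 1) α (i, k)
        = (α ^ (i : ℕ))⁻¹ * partialEval f m (N + 1) α ((i : ℕ) + 1) := by
      simp only [xorshiftVec, if_pos hk]
      field_simp
      ring
    rw [hv, hstep, mul_add (α ^ (i : ℕ))⁻¹, inv_mul_cancel_left₀ (pow_ne_zero _ h0), if_pos hk]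
    congr 1
    split_ifs with hi
    · simp [hi, partialEval]
    · simp only [xorshiftVec, if_pos hk, show (i : ℕ) - 1 + 1 = i by omega]
  · have hi' := i.isLt
    simp only [xorshiftVec, if_neg hk]
    split_ifs with hi
    · rw [zero_add, ← pow_succ', hi]
      congr 1
      simp only [Nat.add_sub_cancel, Nat.sub_zero]
      ring
    · rw [add_zero, ← pow_succ']
      congr 1
      omega

end Eigenvector

/-- A square matrix over `F` whose size is the degree of a monic irreducible `f`, and which has a
root `α` of `f` as an eigenvalue over an extension field, is annihilated by `f`. -/
theorem aeval_eq_zero_of_eigen {F K ι : Type*} [Field F] [Field K] [Algebra F K] [Fintype ι]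
    [DecidableEq ι] {f : Polynomial F} (hmon : f.Monic) (hirr : Irreducible f)
    (hdeg : f.natDegree = Fintype.card ι) {α : K} (hα : aeval α f = 0) {M : Matrix ι ι F}
    {v : ι → K} (hv : v ≠ 0) (h : v ᵥ* M.map (algebraMap F K) = α • v) : aeval M f = 0 := by
  have hroot : aeval α M.charpoly = 0 := by
    rw [aeval_def, ← eval_map, ← Matrix.charpoly_map, Matrix.eval_charpoly]
    refine Matrix.exists_vecMul_eq_zero_iff.1 ⟨v, hv, ?_⟩
    rw [Matrix.vecMul_sub, h, Matrix.scalar_apply, ← Matrix.smul_one_eq_diagonal,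
      Matrix.vecMul_smul, Matrix.vecMul_one, sub_self]
  have hdvd : f ∣ M.charpoly := by
    rw [minpoly.eq_of_irreducible_of_monic hirr hα hmon]
    exact minpoly.dvd F α hroot
  rw [← eq_of_monic_of_dvd_of_natDegree_le hmon M.charpoly_monic hdvd
    (by rw [M.charpoly_natDegree_eq_dim, hdeg])]
  exact M.aeval_self_charpoly

theorem vecMul_pow_of_eigen {K ι : Type*} [Field K] [Fintype ι] [DecidableEq ι]
    {M : Matrix ι ι K} {α : K} {v : ι → K} (h : v ᵥ* M = α • v) (k : ℕ) :
    v ᵥ* M ^ k = α ^ k • v := by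
  induction k with
  | zero => simp
  | succ k ih =>
    rw [pow_succ, ← Matrix.vecMul_vecMul, ih, Matrix.smul_vecMul, h, smul_smul, pow_succ]

/-- If `f` is a primitive polynomial of degree `mn` over `F_2`, then the block companion
matrix `T` is invertible and has multiplicative order exactly `2^{mn} - 1`. -/
theorem orderOf_xorshiftT (m n : ℕ) (hm : 0 < m) (hn : 0 < n)
    (f : Polynomial (ZMod 2)) (hf : IsPrimitivePoly f (m * n)) :
    IsUnit (xorshiftT f m n) ∧ orderOf (xorshiftT f m n) = 2 ^ (m * n) - 1 := by
  obtain ⟨hmon, hirr, hdeg, hord⟩ := hf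
  have : Fact (Irreducible f) := ⟨hirr⟩
  have hpos : 0 < 2 ^ (m * n) - 1 := by
    have := Nat.one_lt_two_pow (Nat.mul_pos hm hn).ne'
    omega
  -- `AdjoinRoot f` is by definition the quotient `F_2[X]/(f)`, now equipped with a field structure
  have hord' : orderOf (AdjoinRoot.root f) = 2 ^ (m * n) - 1 := hord
  set α : AdjoinRoot f := AdjoinRoot.root f with hαdef
  have hα : aeval α f = 0 := by rw [AdjoinRoot.aeval_eq, AdjoinRoot.mk_self]
  -- `α` is a unit since its order is positive; this excludes `f = X`
  have h0 : α ≠ 0 := (orderOf_pos_iff.1 (hord' ▸ hpos)).isUnit.ne_zero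
  have heig := xorshiftVec_vecMul hm hn hmon hdeg hα h0
  have hv : xorshiftVec f m n α ≠ 0 := by
    intro h
    have h1 := xorshiftVec_last hm hmon hdeg hα h0 (⟨n - 1, by omega⟩, ⟨0, hm⟩) rfl
    rw [h] at h1
    simp at h1
  have hT : aeval (xorshiftT f m n) f = 0 :=
    aeval_eq_zero_of_eigen hmon hirr (by simp [hdeg, mul_comm]) hα hv heig
  have horder : orderOf (xorshiftT f m n) = 2 ^ (m * n) - 1 := by
    rw [← hord', orderOf_eq_orderOf_iff]
    intro k
    constructor
    · intro hk
      have h1 := vecMul_pow_of_eigen heig k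
      rw [← Matrix.map_pow, hk, Matrix.map_one _ (map_zero _) (map_one _), Matrix.vecMul_one] at h1
      exact smul_left_injective _ hv (by simpa using h1.symm)
    · intro hk
      have hdvd : f ∣ X ^ k - 1 := by
        rw [← AdjoinRoot.mk_eq_zero, map_sub, map_pow, map_one, AdjoinRoot.mk_X, ← hαdef, hk,
          sub_self]
      obtain ⟨q, hq⟩ := hdvd
      have h1 := congrArg (aeval (xorshiftT f m n)) hq
      rw [map_mul, hT, zero_mul, map_sub, map_pow, aeval_X, map_one] at h1
      exact sub_eq_zero.1 h1
  exact ⟨(orderOf_pos_iff.1 (horder ▸ hpos)).isUnit, horder⟩
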